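/- Let V_1, …, V_n be H-modules, each finite-dimensional over F and indecomposable, and suppose every indecomposable H-module that is finite-dimensional over F is isomorphic to some V_i. Then for all m, s : Fin n → ℕ and every H-linear map f : V^(s) → V^(m), there exist t : Fin n → ℕ and a surjective H-linear map p : V^(m) → V^(t) whose kernel equals the range of f. -/

import Mathlib

/-- An `H`-module `M` is indecomposable if it is nonzero and whenever `p` and `q` are
complementary submodules, one of them is trivial. -/
def IsIndecomposableModule (H : Type*) [Ring H] (M : Type*) [AddCommGroup M]
    [Module H M] : Prop :=
  (∃ x : M, x ≠ 0) ∧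
    ∀ p q : Submodule H M, p ⊓ q = ⊥ → p ⊔ q = ⊤ → p = ⊥ ∨ q = ⊥

/-- Over an `F`-algebra `H`, if every finite-dimensional indecomposable module is isomorphic to
some `V i`, then every finite-dimensional module is a finite product of copies of the `V i`. -/
theorem exists_linearEquiv_pi_of_indecomposables.{u} (F : Type*) [Field F] (H : Type*) [Ring H]
    [Algebra F H] {κ : Type*} (V : κ → Type u)
    [∀ i, AddCommGroup (V i)] [∀ i, Module H (V i)]
    (hall : ∀ (W : Type u) [AddCommGroup W] [Module H W] [Module F W]
      [IsScalarTower F H W] [FiniteDimensional F W],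
      IsIndecomposableModule H W → ∃ i : κ, Nonempty (W ≃ₗ[H] V i))
    (W : Type u) [AddCommGroup W] [Module H W] [Module F W]
    [IsScalarTower F H W] [FiniteDimensional F W] :
    ∃ (ι : Type) (_ : Fintype ι) (c : ι → κ), Nonempty (W ≃ₗ[H] ∀ j, V (c j)) := by
  induction hd : Module.finrank F W using Nat.strong_induction_on generalizing W with
  | _ d ih =>
  by_cases hW : IsIndecomposableModule H W
  · obtain ⟨i, ⟨e⟩⟩ := hall W hW
    exact ⟨Unit, inferInstance, fun _ => i, ⟨e.trans (LinearEquiv.funUnique Unit H (V i)).symm⟩⟩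
  rcases subsingleton_or_nontrivial W with hs | hn
  · exact ⟨Empty, inferInstance, Empty.elim, ⟨⟨0, 0, fun _ => Subsingleton.elim _ _,
      fun _ => Subsingleton.elim _ _⟩⟩⟩
  · have hdec : ∃ p q : Submodule H W, p ⊓ q = ⊥ ∧ p ⊔ q = ⊤ ∧ p ≠ ⊥ ∧ q ≠ ⊥ := by
      by_contra! h
      refine hW ⟨exists_ne 0, fun p q h₁ h₂ => ?_⟩
      by_cases hp : p = ⊥
      · exact Or.inl hp
      · exact Or.inr (h p q h₁ h₂ hp)
    obtain ⟨p, q, h₁, h₂, hp, hq⟩ := hdec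
    let e := Submodule.prodEquivOfIsCompl p q
      ⟨disjoint_iff.mpr h₁, codisjoint_iff.mpr h₂⟩
    have : FiniteDimensional F p :=
      inferInstanceAs (FiniteDimensional F (p.restrictScalars F))
    have : FiniteDimensional F q :=
      inferInstanceAs (FiniteDimensional F (q.restrictScalars F))
    have hsum : Module.finrank F p + Module.finrank F q = d := by
      rw [← hd, ← (e.restrictScalars F).finrank_eq, Module.finrank_prod]
    have : Nontrivial p := (Submodule.nontrivial_iff_ne_bot).mpr hp
    have : Nontrivial q := (Submodule.nontrivial_iff_ne_bot).mpr hq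
    have hp' : 0 < Module.finrank F p := Module.finrank_pos
    have hq' : 0 < Module.finrank F q := Module.finrank_pos
    obtain ⟨ι₁, _, c₁, ⟨e₁⟩⟩ := ih _ (by omega) p rfl
    obtain ⟨ι₂, _, c₂, ⟨e₂⟩⟩ := ih _ (by omega) q rfl
    exact ⟨ι₁ ⊕ ι₂, inferInstance, Sum.elim c₁ c₂, ⟨(e.symm.trans (e₁.prodCongr e₂)).trans
      (LinearEquiv.sumPiEquivProdPi H ι₁ ι₂ fun j => V (Sum.elim c₁ c₂ j)).symm⟩⟩

/-- A finite product of members of a family `V` is the direct sum of the `V i` taken with suitable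
multiplicities. -/
theorem exists_pi_linearEquiv_directSum_sigma_fin (H : Type*) [Ring H] {κ : Type*} [Fintype κ]
    (V : κ → Type*) [∀ i, AddCommGroup (V i)] [∀ i, Module H (V i)]
    {ι : Type*} [Fintype ι] (c : ι → κ) :
    ∃ t : κ → ℕ, Nonempty ((∀ j, V (c j)) ≃ₗ[H]
      DirectSum (Σ i : κ, Fin (t i)) fun q => V q.1) := by
  classical
  let t : κ → ℕ := fun i => Fintype.card {j // c j = i}
  let fiberEquiv (i : κ) : Fin (t i) ≃ {j // c j = i} := (Fintype.equivFin _).symm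
  let e : (Σ i : κ, Fin (t i)) ≃ ι :=
    (Equiv.sigmaCongrRight fiberEquiv).trans (Equiv.sigmaFiberEquiv c)
  have he (x : Σ i : κ, Fin (t i)) : c (e x) = x.1 := (fiberEquiv x.1 x.2).2
  have hcast {i j : κ} (h : i = j) : Nonempty (V i ≃ₗ[H] V j) := h ▸ ⟨LinearEquiv.refl H (V i)⟩
  exact ⟨t, ⟨((LinearEquiv.piCongrLeft H (fun j => V (c j)) e).symm.trans
    (LinearEquiv.piCongrRight fun x => (hcast (he x)).some)).trans
    (DirectSum.linearEquivFunOnFintype H _ fun q : Σ i : κ, Fin (t i) => V q.1).symm⟩⟩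

theorem stmt10.{u} (F : Type*) [Field F] (H : Type*) [Ring H] [Algebra F H]
    (n : ℕ) (V : Fin n → Type u)
    [∀ i, AddCommGroup (V i)] [∀ i, Module H (V i)]
    [∀ i, Module F (V i)] [∀ i, IsScalarTower F H (V i)]
    [∀ i, FiniteDimensional F (V i)]
    (hind : ∀ i, IsIndecomposableModule H (V i))
    (hall : ∀ (W : Type u) [AddCommGroup W] [Module H W] [Module F W]
      [IsScalarTower F H W] [FiniteDimensional F W],
      IsIndecomposableModule H W → ∃ i : Fin n, Nonempty (W ≃ₗ[H] V i))
    (m s : Fin n → ℕ)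
    (f : (DirectSum (Σ i : Fin n, Fin (s i)) fun p => V p.1) →ₗ[H]
      (DirectSum (Σ i : Fin n, Fin (m i)) fun p => V p.1)) :
    ∃ (t : Fin n → ℕ)
      (p : (DirectSum (Σ i : Fin n, Fin (m i)) fun q => V q.1) →ₗ[H]
        (DirectSum (Σ i : Fin n, Fin (t i)) fun q => V q.1)),
      Function.Surjective p ∧ LinearMap.ker p = LinearMap.range f := by
  have : IsScalarTower F H (DirectSum (Σ i : Fin n, Fin (m i)) fun p => V p.1) :=
    inferInstanceAs (IsScalarTower F H (Π₀ p : Σ i : Fin n, Fin (m i), V p.1))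
  obtain ⟨ι, _, c, ⟨e₁⟩⟩ := exists_linearEquiv_pi_of_indecomposables F H V hall (_ ⧸ f.range)
  obtain ⟨t, ⟨e₂⟩⟩ := exists_pi_linearEquiv_directSum_sigma_fin H V c
  refine ⟨t, (e₁.trans e₂).toLinearMap ∘ₗ f.range.mkQ,
    (e₁.trans e₂).surjective.comp f.range.mkQ_surjective, ?_⟩
  rw [LinearEquiv.ker_comp, Submodule.ker_mkQ]
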